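/- The Bankers cost model (⇓ᴮ, Φᴮ, ⌊·⌋ᴮ) is sound: whenever Γ : e ⇓ᴮ_n Δ : v, there exists k with ⌊Γ⌋ᴮ : e ⇓ᴿ_k ⌊Δ⌋ᴮ : v and k + Φᴮ(Δ) − Φᴮ(Γ) ≤ n. -/

import Mathlib

/-! ## Syntax of the fine-grain call-by-value lambda calculus with thunks -/

mutual
inductive Val : Type where
  | var : String → Val
  | ptr : Nat → Val
  | unit : Val
  | inl : Val → Val
  | inr : Val → Val
  | pair : Val → Val → Val
  | lam : String → Expr → Val

inductive HeapVal : Type where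
  | fold : Val → HeapVal
  | memo : Val → HeapVal
  | lazy : String → Val → HeapVal

inductive Expr : Type where
  | ret : Val → Expr
  | alloc : HeapVal → Expr
  | letE : String → Expr → Expr → Expr
  | caseE : Val → String → Expr → String → Expr → Expr
  | splitE : Val → String → String → Expr → Expr
  | app : Val → Val → Expr
  | unfoldE : Val → Expr
  | call : String → Val → Expr
  | force : Val → Expr
  | save : Nat → Val → Expr
  | spend : Nat → Val → Expr → Expr
  | pass : Val → Expr
end

/-! ## Capture-avoiding substitution (values substituted are closed) -/

mutual
def substV (v : Val) (x : String) : Val → Val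
  | .var y => if y = x then v else .var y
  | .ptr a => .ptr a
  | .unit => .unit
  | .inl w => .inl (substV v x w)
  | .inr w => .inr (substV v x w)
  | .pair w₁ w₂ => .pair (substV v x w₁) (substV v x w₂)
  | .lam y e => if y = x then .lam y e else .lam y (substE v x e)

def substH (v : Val) (x : String) : HeapVal → HeapVal
  | .fold w => .fold (substV v x w)
  | .memo w => .memo (substV v x w)
  | .lazy F w => .lazy F (substV v x w)

def substE (v : Val) (x : String) : Expr → Expr
  | .ret w => .ret (substV v x w)
  | .alloc hv => .alloc (substH v x hv)
  | .letE y e₁ e₂ => .letE y (substE v x e₁) (if y = x then e₂ else substE v x e₂)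
  | .caseE w y₁ e₁ y₂ e₂ =>
      .caseE (substV v x w) y₁ (if y₁ = x then e₁ else substE v x e₁)
        y₂ (if y₂ = x then e₂ else substE v x e₂)
  | .splitE w y₁ y₂ e =>
      .splitE (substV v x w) y₁ y₂ (if y₁ = x ∨ y₂ = x then e else substE v x e)
  | .app w₁ w₂ => .app (substV v x w₁) (substV v x w₂)
  | .unfoldE w => .unfoldE (substV v x w)
  | .call F w => .call F (substV v x w)
  | .force w => .force (substV v x w)
  | .save n w => .save n (substV v x w)
  | .spend n w e => .spend n (substV v x w) (substE v x e)
  | .pass w => .pass (substV v x w)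
end

/-! ## Heaps: finite partial maps from pointers to (annotated) heap values -/

structure Heap (A : Type) : Type where
  look : Nat → Option A
  fin : {a : Nat | look a ≠ none}.Finite

namespace Heap

def empty {A : Type} : Heap A := ⟨fun _ => none, by simp⟩

def upd {A : Type} (Γ : Heap A) (a : Nat) (v : A) : Heap A :=
  ⟨fun b => if b = a then some v else Γ.look b, by
    apply Set.Finite.subset (Γ.fin.insert a)
    intro b hb
    simp only [Set.mem_setOf_eq] at hb
    by_cases h : b = a
    · simp [h]
    · simp only [h, if_false] at hb
      exact Set.mem_insert_iff.mpr (Or.inr hb)⟩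

def erase {A : Type} (Γ : Heap A) (a : Nat) : Heap A :=
  ⟨fun b => if b = a then none else Γ.look b, by
    apply Set.Finite.subset Γ.fin
    intro b hb
    simp only [Set.mem_setOf_eq] at hb ⊢
    by_cases h : b = a
    · simp [h] at hb
    · simpa [h] using hb⟩

def eraseSet {A : Type} (Γ : Heap A) (D : Finset Nat) : Heap A :=
  ⟨fun b => if b ∈ D then none else Γ.look b, by
    apply Set.Finite.subset Γ.fin
    intro b hb
    simp only [Set.mem_setOf_eq] at hb ⊢
    by_cases h : b ∈ D
    · simp [h] at hb
    · simpa [h] using hb⟩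

def map {A B : Type} (Γ : Heap A) (f : A → B) : Heap B :=
  ⟨fun b => (Γ.look b).map f, by
    apply Set.Finite.subset Γ.fin
    intro b hb
    simp only [Set.mem_setOf_eq] at hb ⊢
    intro h
    rw [h] at hb
    simp at hb⟩

noncomputable def dom {A : Type} (Γ : Heap A) : Finset Nat := Γ.fin.toFinset

/-- Sum a numeric annotation over all cells of the heap. -/
noncomputable def total {A : Type} (Γ : Heap A) (f : A → ℕ) : ℕ :=
  ∑ a ∈ Γ.dom, (Γ.look a).elim 0 f

end Heap

/-! ## The real cost semantics ⇓ᴿ -/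

/-- Environment of top-level (possibly recursive) function definitions. -/
abbrev FEnv := String → Option (String × Expr)

abbrev RHeap := Heap HeapVal

/-- Big-step real semantics `Γ : e ⇓ᴿ_k Δ : v`.  Lambda applications and
function calls cost one step; `save`, `spend` and `pass` are no-ops. -/
inductive RBig (𝓕 : FEnv) : RHeap → Expr → Nat → RHeap → Val → Prop where
  | ret : ∀ Γ v, RBig 𝓕 Γ (.ret v) 0 Γ v
  | alloc : ∀ Γ a hv, Γ.look a = none →
      RBig 𝓕 Γ (.alloc hv) 0 (Γ.upd a hv) (.ptr a)
  | letE : ∀ Γ Δ Θ x e₁ e₂ k l v w,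
      RBig 𝓕 Γ e₁ k Δ v → RBig 𝓕 Δ (substE v x e₂) l Θ w →
      RBig 𝓕 Γ (.letE x e₁ e₂) (k + l) Θ w
  | caseL : ∀ Γ Δ v x₁ e₁ x₂ e₂ k w,
      RBig 𝓕 Γ (substE v x₁ e₁) k Δ w →
      RBig 𝓕 Γ (.caseE (.inl v) x₁ e₁ x₂ e₂) k Δ w
  | caseR : ∀ Γ Δ v x₁ e₁ x₂ e₂ k w,
      RBig 𝓕 Γ (substE v x₂ e₂) k Δ w →
      RBig 𝓕 Γ (.caseE (.inr v) x₁ e₁ x₂ e₂) k Δ w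
  | splitE : ∀ Γ Δ v₁ v₂ x y e k w,
      RBig 𝓕 Γ (substE v₂ y (substE v₁ x e)) k Δ w →
      RBig 𝓕 Γ (.splitE (.pair v₁ v₂) x y e) k Δ w
  | app : ∀ Γ Δ x e v k w,
      RBig 𝓕 Γ (substE v x e) k Δ w →
      RBig 𝓕 Γ (.app (.lam x e) v) (k + 1) Δ w
  | unfoldE : ∀ Γ a v, Γ.look a = some (.fold v) →
      RBig 𝓕 Γ (.unfoldE (.ptr a)) 0 Γ v
  | call : ∀ Γ Δ F x e v k w, 𝓕 F = some (x, e) →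
      RBig 𝓕 Γ (substE v x e) k Δ w →
      RBig 𝓕 Γ (.call F v) (k + 1) Δ w
  | force : ∀ Γ Δ a F v k w, Γ.look a = some (.lazy F v) →
      RBig 𝓕 (Γ.erase a) (.call F v) k Δ w →
      RBig 𝓕 Γ (.force (.ptr a)) k (Δ.upd a (.memo w)) w
  | recall : ∀ Γ a v, Γ.look a = some (.memo v) →
      RBig 𝓕 Γ (.force (.ptr a)) 0 Γ v
  | save : ∀ Γ m v, RBig 𝓕 Γ (.save m v) 0 Γ v
  | spend : ∀ Γ Δ m v e k w, RBig 𝓕 Γ e k Δ w →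
      RBig 𝓕 Γ (.spend m v e) k Δ w
  | pass : ∀ Γ v, RBig 𝓕 Γ (.pass v) 0 Γ v
/-! ## The Bankers semantics ⇓ᴮ : every cell carries a credit annotation -/

abbrev BHeap := Heap (ℕ × HeapVal)

/-- Big-step Bankers semantics `Γ : e ⇓ᴮ_n Δ : v`. -/
inductive BBig (𝓕 : FEnv) : BHeap → Expr → Nat → BHeap → Val → Prop where
  | ret : ∀ Γ v, BBig 𝓕 Γ (.ret v) 0 Γ v
  | alloc : ∀ Γ a hv, Γ.look a = none →
      BBig 𝓕 Γ (.alloc hv) 0 (Γ.upd a (0, hv)) (.ptr a)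
  | letE : ∀ Γ Δ Θ x e₁ e₂ k l v w,
      BBig 𝓕 Γ e₁ k Δ v → BBig 𝓕 Δ (substE v x e₂) l Θ w →
      BBig 𝓕 Γ (.letE x e₁ e₂) (k + l) Θ w
  | caseL : ∀ Γ Δ v x₁ e₁ x₂ e₂ k w,
      BBig 𝓕 Γ (substE v x₁ e₁) k Δ w →
      BBig 𝓕 Γ (.caseE (.inl v) x₁ e₁ x₂ e₂) k Δ w
  | caseR : ∀ Γ Δ v x₁ e₁ x₂ e₂ k w,
      BBig 𝓕 Γ (substE v x₂ e₂) k Δ w →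
      BBig 𝓕 Γ (.caseE (.inr v) x₁ e₁ x₂ e₂) k Δ w
  | splitE : ∀ Γ Δ v₁ v₂ x y e k w,
      BBig 𝓕 Γ (substE v₂ y (substE v₁ x e)) k Δ w →
      BBig 𝓕 Γ (.splitE (.pair v₁ v₂) x y e) k Δ w
  | app : ∀ Γ Δ x e v k w,
      BBig 𝓕 Γ (substE v x e) k Δ w →
      BBig 𝓕 Γ (.app (.lam x e) v) (k + 1) Δ w
  | unfoldE : ∀ Γ a n v, Γ.look a = some (n, .fold v) →
      BBig 𝓕 Γ (.unfoldE (.ptr a)) 0 Γ v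
  | call : ∀ Γ Δ F x e v k w, 𝓕 F = some (x, e) →
      BBig 𝓕 Γ (substE v x e) k Δ w →
      BBig 𝓕 Γ (.call F v) (k + 1) Δ w
  | force : ∀ Γ Δ a n F v k w, Γ.look a = some (n, .lazy F v) →
      BBig 𝓕 (Γ.erase a) (.call F v) k Δ w →
      BBig 𝓕 Γ (.force (.ptr a)) k (Δ.upd a (n, .memo w)) w
  | recall : ∀ Γ a n v, Γ.look a = some (n, .memo v) →
      BBig 𝓕 Γ (.force (.ptr a)) 0 Γ v
  | save : ∀ Γ a n hv m, Γ.look a = some (n, hv) →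
      BBig 𝓕 Γ (.save m (.ptr a)) m (Γ.upd a (n + m, hv)) (.ptr a)
  | spend : ∀ Γ Δ a n hv m e k w, Γ.look a = some (n + m, hv) →
      BBig 𝓕 (Γ.upd a (n, hv)) e k Δ w →
      BBig 𝓕 Γ (.spend m (.ptr a) e) (k - m) Δ w

/-- The potential Φᴮ: the total number of credits in the heap. -/
noncomputable def ΦB (Γ : BHeap) : ℕ := Γ.total Prod.fst

/-- The erasure ⌊·⌋ᴮ: drop the credit annotations. -/
def stripB (Γ : BHeap) : RHeap := Γ.map Prod.snd

theorem Heap.ext_look {A : Type} {Γ Δ : Heap A} (h : ∀ b, Γ.look b = Δ.look b) : Γ = Δ := by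
  cases Γ; cases Δ
  have := funext h
  simp only at this
  subst this
  rfl

theorem Heap.total_eq {A : Type} (Γ : Heap A) (f : A → ℕ) (S : Finset ℕ) (h : Γ.dom ⊆ S) :
    Γ.total f = ∑ a ∈ S, (Γ.look a).elim 0 f := by
  unfold Heap.total
  apply Finset.sum_subset h
  intro x _ hx
  have : Γ.look x = none := by
    by_contra hc
    exact hx (by simpa [Heap.dom] using hc)
  simp [this]

theorem Heap.total_split {A : Type} (Γ : Heap A) (f : A → ℕ) (a : ℕ) (S : Finset ℕ)
    (h : Γ.dom ⊆ insert a S) :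
    Γ.total f = (Γ.look a).elim 0 f + ∑ b ∈ S.erase a, (Γ.look b).elim 0 f := by
  rw [Γ.total_eq f _ h, ← Finset.add_sum_erase _ _ (Finset.mem_insert_self a S),
    Finset.erase_insert_eq_erase]

theorem ΦB_upd (Γ : BHeap) (a n : ℕ) (hv : HeapVal) :
    ΦB (Γ.upd a (n, hv)) + (Γ.look a).elim 0 Prod.fst = ΦB Γ + n := by
  unfold ΦB
  rw [Γ.total_split _ a Γ.dom (Finset.subset_insert _ _),
    (Γ.upd a (n, hv)).total_split _ a Γ.dom (by
      intro b hb
      by_cases h : b = a <;> simp_all [Heap.dom, Heap.upd])]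
  have : ∑ b ∈ Γ.dom.erase a, ((Γ.upd a (n, hv)).look b).elim 0 Prod.fst
      = ∑ b ∈ Γ.dom.erase a, (Γ.look b).elim 0 Prod.fst := by
    apply Finset.sum_congr rfl
    intro b hb
    simp [Heap.upd, Finset.ne_of_mem_erase hb]
  rw [this]
  simp [Heap.upd]
  omega

theorem ΦB_erase (Γ : BHeap) (a : ℕ) :
    ΦB (Γ.erase a) + (Γ.look a).elim 0 Prod.fst = ΦB Γ := by
  unfold ΦB
  rw [Γ.total_split _ a Γ.dom (Finset.subset_insert _ _),
    (Γ.erase a).total_split _ a Γ.dom (by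
      intro b hb
      by_cases h : b = a <;> simp_all [Heap.dom, Heap.erase])]
  have : ∑ b ∈ Γ.dom.erase a, ((Γ.erase a).look b).elim 0 Prod.fst
      = ∑ b ∈ Γ.dom.erase a, (Γ.look b).elim 0 Prod.fst := by
    apply Finset.sum_congr rfl
    intro b hb
    simp [Heap.erase, Finset.ne_of_mem_erase hb]
  rw [this]
  simp [Heap.erase]
  omega

theorem stripB_upd (Γ : BHeap) (a n : ℕ) (hv : HeapVal) :
    stripB (Γ.upd a (n, hv)) = (stripB Γ).upd a hv := by
  apply Heap.ext_look
  intro b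
  by_cases h : b = a <;> simp [stripB, Heap.map, Heap.upd, h]

theorem stripB_erase (Γ : BHeap) (a : ℕ) :
    stripB (Γ.erase a) = (stripB Γ).erase a := by
  apply Heap.ext_look
  intro b
  by_cases h : b = a <;> simp [stripB, Heap.map, Heap.erase, h]

theorem stripB_upd_same (Γ : BHeap) (a n m : ℕ) (hv : HeapVal)
    (h : Γ.look a = some (n, hv)) : stripB (Γ.upd a (m, hv)) = stripB Γ := by
  apply Heap.ext_look
  intro b
  by_cases hb : b = a <;> simp [stripB, Heap.map, Heap.upd, hb, h]

theorem stripB_look (Γ : BHeap) (a n : ℕ) (hv : HeapVal)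
    (h : Γ.look a = some (n, hv)) : (stripB Γ).look a = some hv := by
  simp [stripB, Heap.map, h]

/-- **Soundness of the Bankers cost model** (Lemma `bankers-sound`):
whenever `Γ : e ⇓ᴮ_n Δ : v`, there exists `k` with
`⌊Γ⌋ᴮ : e ⇓ᴿ_k ⌊Δ⌋ᴮ : v` and `k + Φᴮ(Δ) − Φᴮ(Γ) ≤ n`. -/
theorem bankers_sound (𝓕 : FEnv) (Γ Δ : BHeap) (e : Expr) (n : ℕ) (v : Val)
    (h : BBig 𝓕 Γ e n Δ v) :
    ∃ k : ℕ, RBig 𝓕 (stripB Γ) e k (stripB Δ) v ∧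
      (k : ℤ) + (ΦB Δ : ℤ) - (ΦB Γ : ℤ) ≤ (n : ℤ) := by
  induction h with
  | ret Γ v => exact ⟨0, .ret _ _, by simp⟩
  | alloc Γ a hv h =>
    refine ⟨0, ?_, ?_⟩
    · rw [stripB_upd]
      exact .alloc _ _ _ (by simp [stripB, Heap.map, h])
    · have := ΦB_upd Γ a 0 hv
      push_cast
      omega
  | letE Γ Δ Θ x e₁ e₂ k l v w _ _ ih₁ ih₂ =>
    obtain ⟨k₁, h₁, c₁⟩ := ih₁
    obtain ⟨k₂, h₂, c₂⟩ := ih₂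
    exact ⟨k₁ + k₂, .letE _ _ _ _ _ _ _ _ _ _ h₁ h₂, by push_cast; omega⟩
  | caseL Γ Δ v x₁ e₁ x₂ e₂ k w _ ih =>
    obtain ⟨k₁, h₁, c₁⟩ := ih
    exact ⟨k₁, .caseL _ _ _ _ _ _ _ _ _ h₁, c₁⟩
  | caseR Γ Δ v x₁ e₁ x₂ e₂ k w _ ih =>
    obtain ⟨k₁, h₁, c₁⟩ := ih
    exact ⟨k₁, .caseR _ _ _ _ _ _ _ _ _ h₁, c₁⟩
  | splitE Γ Δ v₁ v₂ x y e k w _ ih =>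
    obtain ⟨k₁, h₁, c₁⟩ := ih
    exact ⟨k₁, .splitE _ _ _ _ _ _ _ _ _ h₁, c₁⟩
  | app Γ Δ x e v k w _ ih =>
    obtain ⟨k₁, h₁, c₁⟩ := ih
    exact ⟨k₁ + 1, .app _ _ _ _ _ _ _ h₁, by push_cast; omega⟩
  | unfoldE Γ a n v h => exact ⟨0, .unfoldE _ _ _ (stripB_look _ _ _ _ h), by simp⟩
  | call Γ Δ F x e v k w hF _ ih =>
    obtain ⟨k₁, h₁, c₁⟩ := ih
    exact ⟨k₁ + 1, .call _ _ _ _ _ _ _ _ hF h₁, by push_cast; omega⟩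
  | force Γ Δ a n F v k w h _ ih =>
    obtain ⟨k₁, h₁, c₁⟩ := ih
    refine ⟨k₁, ?_, ?_⟩
    · rw [stripB_upd]
      rw [stripB_erase] at h₁
      exact .force _ _ _ _ _ _ _ (stripB_look _ _ _ _ h) h₁
    · have u := ΦB_upd Δ a n (.memo w)
      have r := ΦB_erase Γ a
      simp only [h, Option.elim_some] at r
      omega
  | save Γ a n hv m h =>
    refine ⟨0, ?_, ?_⟩
    · rw [stripB_upd_same _ _ _ _ _ h]
      exact .save _ _ _
    · have u := ΦB_upd Γ a (n + m) hv
      simp only [h, Option.elim_some] at u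
      push_cast
      omega
  | spend Γ Δ a n hv m e k w h _ ih =>
    obtain ⟨k₁, h₁, c₁⟩ := ih
    rw [stripB_upd_same _ _ _ _ _ h] at h₁
    refine ⟨k₁, .spend _ _ _ _ _ _ _ h₁, ?_⟩
    have u := ΦB_upd Γ a n hv
    simp only [h, Option.elim_some] at u
    omega
  | _ =>
    rename_i Γ a n v h
    exact ⟨0, RBig.recall _ _ _ (stripB_look _ _ _ _ h), by simp⟩
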